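/- There exists a universal constant C > 0 such that the following holds. Let α ∈ ℝ^d have entries in [0,1] with at least one entry equal to 1, and suppose ‖α‖₂² > n + 1 and ‖α‖₂² is sufficiently large relative to n (as guaranteed when n³(‖α‖₄/‖α‖₂)⁴ is small). Let 𝕐 be a random n×d matrix whose rows are i.i.d. N(0,D_α). Then −E[ln det((1/‖α‖₂²)·𝕐 D_α 𝕐ᵀ)] ≤ C·( n²·(‖α‖₄/‖α‖₂)⁴ + √( n·(‖α‖₄/‖α‖₂)⁴ ) ). -/

import Mathlib

open MeasureTheory ProbabilityTheory Real Filter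
open scoped Classical ENNReal NNReal

noncomputable section

/-- Euclidean inner product on `Fin d → ℝ`. -/
def dotp {d : ℕ} (x y : Fin d → ℝ) : ℝ := ∑ i, x i * y i

/-- The `q`-norm of a vector `α ∈ ℝ^d`. -/
def nrm {d : ℕ} (q : ℕ) (α : Fin d → ℝ) : ℝ := (∑ i, α i ^ q) ^ ((1 : ℝ) / q)

/-- The centered Gaussian measure `N(0, D_α)` on `ℝ^d`, `D_α = diag α`. -/
def gaussPi (d : ℕ) (α : Fin d → ℝ) : Measure (Fin d → ℝ) :=
  Measure.pi fun i => gaussianReal 0 (Real.toNNReal (α i))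

/-- The law of `n` i.i.d. samples from `N(0, D_α)`. -/
def sampleMeasure (n d : ℕ) (α : Fin d → ℝ) : Measure (Fin n → Fin d → ℝ) :=
  Measure.pi fun _ => gaussPi d α

/-- `t` is the `p`-th upper quantile of `⟨X₁, X₂⟩` for `X₁, X₂` i.i.d. `N(0, D_α)`. -/
def IsThreshold (d : ℕ) (α : Fin d → ℝ) (p t : ℝ) : Prop :=
  ((gaussPi d α).prod (gaussPi d α)) {xy | t ≤ dotp xy.1 xy.2} = ENNReal.ofReal p

instance (n : ℕ) : MeasurableSpace (SimpleGraph (Fin n)) := ⊤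

/-- The anisotropic random geometric graph `G(n, p, α)`, with threshold `t = t_{p,α}`. -/
def geomGraph (n d : ℕ) (α : Fin d → ℝ) (t : ℝ) : Measure (SimpleGraph (Fin n)) :=
  Measure.map (fun X => SimpleGraph.fromRel fun i j => t ≤ dotp (X i) (X j))
    (sampleMeasure n d α)

/-- The Erdős–Rényi random graph `G(n, p)`. -/
def erGraph (n : ℕ) (p : ℝ) : Measure (SimpleGraph (Fin n)) :=
  Measure.map (fun x => SimpleGraph.fromRel fun i j => x s(i, j) ≤ p)
    (Measure.pi fun _ : Sym2 (Fin n) => volume.restrict (Set.Icc (0 : ℝ) 1))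

/-- Total variation distance between two measures. -/
def tvDist {Ω : Type*} [MeasurableSpace Ω] (μ ν : Measure Ω) : ℝ :=
  ⨆ s : {s : Set Ω // MeasurableSet s}, |(μ s.1).toReal - (ν s.1).toReal|

/-- The normalized Gram-type matrix `(1/‖α‖₂²)·𝕐 D_α 𝕐ᵀ`, whose `(j,k)` entry is
`(1/‖α‖₂²) ∑_i α_i y_{j,i} y_{k,i}` for `𝕐` with rows `y_j`. -/
def gramMat {n d : ℕ} (α : Fin d → ℝ) (X : Fin n → Fin d → ℝ) :
    Matrix (Fin n) (Fin n) ℝ :=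
  Matrix.of fun j k => (∑ i, α i * X j i * X k i) / nrm 2 α ^ 2

/-
For a positive semidefinite `M` of size `n`, the Gaussian integral `∫ exp (-xᵀMx) dx` is at least
`π ^ (n / 2) * (det M) ^ (-1 / 2)`. Take `M` to be the normalized Gram matrix and exchange
expectation and integral: as `∑ j, x j • X j` has law `N(0, |x|² D_α)`, the integrand becomes
`∏ i, (1 + 2 * w i * t) ^ (-1 / 2)` with `t = |x|²` and weights `w i = α i ^ 2 / ‖α‖₂ ^ 2`. These
satisfy `∑ i, w i = 1` and `∑ i, w i ^ 2 = τ = (‖α‖₄ / ‖α‖₂) ^ 4`, so the product is at most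
`exp (-t) * (1 + 2 * τ * t ^ 2)` for `t ≤ τ ^ (-1 / 2)`, and for larger `t` it is dominated by a
polynomial tail of negligible mass as long as `n ^ 3 * τ` is small. This gives
`E (det M) ^ (-1 / 2) ≤ 1 + O(n ^ 2 * τ)`, and `-log y ≤ 2 * (y ^ (-1 / 2) - 1)` concludes.
-/

section GaussianIntegrals

variable {ι : Type*} [Fintype ι]

lemma lintegral_ofReal_prod_pi {E : ι → Type*} [∀ i, MeasurableSpace (E i)]
    {μ : ∀ i, Measure (E i)} [∀ i, SigmaFinite (μ i)] {f : ∀ i, E i → ℝ}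
    (hf : ∀ i, Integrable (f i) (μ i)) (hf₀ : ∀ i x, 0 ≤ f i x) :
    ∫⁻ x, ENNReal.ofReal (∏ i, f i (x i)) ∂Measure.pi μ =
      ENNReal.ofReal (∏ i, ∫ x, f i x ∂μ i) := by
  rw [← integral_fintype_prod_eq_prod, ofReal_integral_eq_lintegral_ofReal
    (Integrable.fintype_prod_dep hf) (.of_forall fun x ↦ Finset.prod_nonneg fun i _ ↦ hf₀ i _)]

lemma dotProduct_self_eq_sum_sq (x : ι → ℝ) : x ⬝ᵥ x = ∑ i, x i ^ 2 := by
  simp only [dotProduct, sq]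

lemma dotProduct_self_nonneg (x : ι → ℝ) : 0 ≤ x ⬝ᵥ x := by
  simpa using dotProduct_self_star_nonneg x

lemma lintegral_exp_neg_mul_dotProduct_self {b : ℝ} (hb : 0 < b) :
    ∫⁻ x : ι → ℝ, ENNReal.ofReal (exp (-(b * (x ⬝ᵥ x)))) =
      ENNReal.ofReal (√(π / b) ^ Fintype.card ι) := by
  have exp_eq_prod (x : ι → ℝ) : exp (-(b * (x ⬝ᵥ x))) = ∏ i, exp (-b * x i ^ 2) := by
    rw [← exp_sum, ← Finset.mul_sum, dotProduct_self_eq_sum_sq, neg_mul]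
  simp only [exp_eq_prod, volume_pi]
  rw [lintegral_ofReal_prod_pi (fun _ ↦ integrable_exp_neg_mul_sq hb) fun _ _ ↦ (exp_pos _).le]
  simp only [integral_gaussian, Finset.prod_const, Finset.card_univ]

open scoped MatrixOrder in
lemma lintegral_exp_neg_quadForm_of_posDef [DecidableEq ι] {M : Matrix ι ι ℝ} (hM : M.PosDef) :
    ∫⁻ x : ι → ℝ, ENNReal.ofReal (exp (-(x ⬝ᵥ M.mulVec x))) =
      ENNReal.ofReal (√π ^ Fintype.card ι) * ENNReal.ofReal M.det ^ (-(1 / 2) : ℝ) := by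
  obtain ⟨B, rfl⟩ := CStarAlgebra.nonneg_iff_eq_star_mul_self.mp hM.posSemidef.nonneg
  rw [Matrix.star_eq_conjTranspose, Matrix.conjTranspose_eq_transpose_of_trivial] at hM ⊢
  have hdet : (B.transpose * B).det = |B.det| ^ (2 : ℝ) := by
    rw [Matrix.det_mul, Matrix.det_transpose, rpow_two, sq_abs, sq]
  have hB : B.det ≠ 0 := fun h ↦ hM.det_pos.ne' (by simp [hdet, h])
  have quadForm_eq (x : ι → ℝ) : x ⬝ᵥ (B.transpose * B).mulVec x =
      Matrix.toLin' B x ⬝ᵥ Matrix.toLin' B x := by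
    rw [← Matrix.mulVec_mulVec, Matrix.dotProduct_mulVec, Matrix.vecMul_transpose,
      Matrix.toLin'_apply]
  have hexp : Measurable fun y : ι → ℝ ↦ ENNReal.ofReal (exp (-(y ⬝ᵥ y))) := by
    unfold dotProduct; fun_prop
  have hstd := lintegral_exp_neg_mul_dotProduct_self (ι := ι) one_pos
  simp only [one_mul, div_one] at hstd
  simp only [quadForm_eq]
  rw [← lintegral_map (μ := volume) hexp
      (LinearMap.continuous_of_finiteDimensional _).measurable,
    Real.map_matrix_volume_pi_eq_smul_volume_pi hB, lintegral_smul_measure, hstd, smul_eq_mul,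
    mul_comm, ENNReal.ofReal_rpow_of_pos hM.det_pos, hdet, ← rpow_mul (abs_nonneg _)]
  norm_num [rpow_neg_one, abs_inv]

/-- At a singular `M` both sides are `∞`, since `0 ^ (-(1 / 2)) = ∞` in `ℝ≥0∞`. -/
lemma le_lintegral_exp_neg_quadForm_of_posSemidef [DecidableEq ι] {M : Matrix ι ι ℝ}
    (hM : M.PosSemidef) :
    ENNReal.ofReal (√π ^ Fintype.card ι) * ENNReal.ofReal M.det ^ (-(1 / 2) : ℝ) ≤
      ∫⁻ x : ι → ℝ, ENNReal.ofReal (exp (-(x ⬝ᵥ M.mulVec x))) := by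
  have hcont : Continuous fun δ : ℝ ↦ ENNReal.ofReal (√π ^ Fintype.card ι) *
      ENNReal.ofReal (M + δ • 1).det ^ (-(1 / 2) : ℝ) := by
    refine (ENNReal.continuous_const_mul ENNReal.ofReal_ne_top).comp
      (ENNReal.continuous_rpow_const.comp (ENNReal.continuous_ofReal.comp ?_))
    exact Continuous.matrix_det (by fun_prop)
  have hlim : Tendsto (fun δ : ℝ ↦ ENNReal.ofReal (√π ^ Fintype.card ι) *
      ENNReal.ofReal (M + δ • 1).det ^ (-(1 / 2) : ℝ)) (nhdsWithin 0 (Set.Ioi 0))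
      (nhds (ENNReal.ofReal (√π ^ Fintype.card ι) * ENNReal.ofReal M.det ^ (-(1 / 2) : ℝ))) := by
    simpa only [zero_smul, add_zero] using (hcont.tendsto 0).mono_left nhdsWithin_le_nhds
  refine le_of_tendsto hlim (eventually_mem_nhdsWithin.mono fun δ hδ ↦ ?_)
  rw [← lintegral_exp_neg_quadForm_of_posDef
    (Matrix.PosDef.posSemidef_add hM (Matrix.PosDef.one.smul hδ))]
  refine lintegral_mono fun x ↦ ENNReal.ofReal_le_ofReal (exp_le_exp.mpr (neg_le_neg ?_))
  rw [Matrix.add_mulVec, dotProduct_add, Matrix.smul_mulVec, Matrix.one_mulVec, dotProduct_smul]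
  exact le_add_of_nonneg_right (mul_nonneg (le_of_lt hδ) (dotProduct_self_nonneg x))

lemma sq_le_two_mul_sq_mul_exp_div {c t : ℝ} (hc : 0 < c) (ht : 0 ≤ t) :
    t ^ 2 ≤ 2 * c ^ 2 * exp (t / c) := by
  have htc : 0 ≤ t / c := by positivity
  calc t ^ 2 = 2 * c ^ 2 * ((t / c) ^ 2 / 2) := by field_simp
    _ ≤ 2 * c ^ 2 * exp (t / c) := by
      gcongr
      linarith [quadratic_le_exp_of_nonneg htc]

lemma two_thirds_le_sqrt_one_sub_inv_two_mul_pow {n : ℕ} (hn : n ≠ 0) :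
    2 / 3 ≤ √(1 - 1 / (2 * n)) ^ n := by
  have hn₁ : (1 : ℝ) ≤ n := by exact_mod_cast Nat.one_le_iff_ne_zero.mpr hn
  have hle : 1 / (2 * n : ℝ) ≤ 1 := (div_le_one₀ (by positivity)).mpr (by linarith)
  refine le_of_pow_le_pow_left₀ two_ne_zero (by positivity) ?_
  calc (2 / 3 : ℝ) ^ 2 ≤ 1 / 2 := by norm_num
    _ = 1 + n * -(1 / (2 * n)) := by field_simp; norm_num
    _ ≤ (1 + -(1 / (2 * n))) ^ n := one_add_mul_le_pow (by linarith) n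
    _ = (√(1 - 1 / (2 * n)) ^ n) ^ 2 := by
      rw [← sub_eq_add_neg, pow_right_comm, sq_sqrt (sub_nonneg.mpr hle)]

lemma lintegral_sq_mul_exp_neg_dotProduct_self_le [Nonempty ι] :
    ∫⁻ x : ι → ℝ, ENNReal.ofReal ((x ⬝ᵥ x) ^ 2 * exp (-(x ⬝ᵥ x))) ≤
      ENNReal.ofReal (12 * Fintype.card ι ^ 2 * √π ^ Fintype.card ι) := by
  set n := Fintype.card ι
  have hn : n ≠ 0 := Fintype.card_ne_zero
  have hn₁ : (1 : ℝ) ≤ n := by exact_mod_cast Nat.one_le_iff_ne_zero.mpr hn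
  set b : ℝ := 1 - 1 / (2 * n) with b_def
  have hb : 0 < b := sub_pos.mpr ((div_lt_one (by positivity)).mpr (by linarith))
  have absorb_sq (t : ℝ) (ht : 0 ≤ t) : t ^ 2 * exp (-t) ≤ 8 * n ^ 2 * exp (-(b * t)) :=
    calc t ^ 2 * exp (-t) ≤ 2 * (2 * n) ^ 2 * exp (t / (2 * n)) * exp (-t) := by
          gcongr; exact sq_le_two_mul_sq_mul_exp_div (by positivity) ht
      _ = 8 * n ^ 2 * exp (-(b * t)) := by rw [mul_assoc, ← exp_add, b_def]; ring_nf
  have hpow : √(π / b) ^ n ≤ 3 / 2 * √π ^ n := by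
    rw [sqrt_div pi_pos.le, div_pow, div_le_iff₀ (by positivity)]
    nlinarith [two_thirds_le_sqrt_one_sub_inv_two_mul_pow hn, pow_pos (sqrt_pos.mpr pi_pos) n]
  calc ∫⁻ x : ι → ℝ, ENNReal.ofReal ((x ⬝ᵥ x) ^ 2 * exp (-(x ⬝ᵥ x)))
      ≤ ∫⁻ x : ι → ℝ, ENNReal.ofReal (8 * n ^ 2) * ENNReal.ofReal (exp (-(b * (x ⬝ᵥ x)))) := by
        refine lintegral_mono fun x ↦ ?_
        rw [← ENNReal.ofReal_mul (by positivity)]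
        exact ENNReal.ofReal_le_ofReal (absorb_sq _ (dotProduct_self_nonneg x))
    _ = ENNReal.ofReal (8 * n ^ 2 * √(π / b) ^ n) := by
        rw [lintegral_const_mul' _ _ ENNReal.ofReal_ne_top,
          lintegral_exp_neg_mul_dotProduct_self hb, ← ENNReal.ofReal_mul (by positivity)]
    _ ≤ ENNReal.ofReal (8 * n ^ 2 * (3 / 2 * √π ^ n)) := by gcongr
    _ = ENNReal.ofReal (12 * n ^ 2 * √π ^ n) := by ring_nf

lemma integrable_inv_one_add_mul_sq {c : ℝ} (hc : 0 < c) :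
    Integrable fun x : ℝ ↦ (1 + c * x ^ 2)⁻¹ := by
  simpa only [mul_pow, sq_sqrt hc.le] using
    integrable_inv_one_add_sq.comp_mul_left' (sqrt_ne_zero'.mpr hc)

lemma integral_inv_one_add_mul_sq {c : ℝ} (hc : 0 < c) :
    ∫ x : ℝ, (1 + c * x ^ 2)⁻¹ = π / √c := by
  have h := Measure.integral_comp_mul_left (fun x : ℝ ↦ (1 + x ^ 2)⁻¹) √c
  simp only [mul_pow, sq_sqrt hc.le, integral_univ_inv_one_add_sq, smul_eq_mul] at h
  rw [h, abs_of_nonneg (by positivity), inv_mul_eq_div]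

lemma lintegral_inv_one_add_mul_dotProduct_self_pow_le {c : ℝ} (hc : 0 < c) :
    ∫⁻ x : ι → ℝ, ENNReal.ofReal ((1 + c * (x ⬝ᵥ x)) ^ Fintype.card ι)⁻¹ ≤
      ENNReal.ofReal ((π / √c) ^ Fintype.card ι) := by
  have prod_le (x : ι → ℝ) :
      ((1 + c * (x ⬝ᵥ x)) ^ Fintype.card ι)⁻¹ ≤ ∏ i, (1 + c * x i ^ 2)⁻¹ := by
    rw [Finset.prod_inv_distrib, ← Finset.card_univ, ← Finset.prod_const,
      dotProduct_self_eq_sum_sq]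
    gcongr with i
    exact Finset.single_le_sum (f := fun i ↦ x i ^ 2) (fun _ _ ↦ sq_nonneg _) (Finset.mem_univ i)
  calc ∫⁻ x : ι → ℝ, ENNReal.ofReal ((1 + c * (x ⬝ᵥ x)) ^ Fintype.card ι)⁻¹
      ≤ ∫⁻ x : ι → ℝ, ENNReal.ofReal (∏ i, (1 + c * x i ^ 2)⁻¹) :=
        lintegral_mono fun x ↦ ENNReal.ofReal_le_ofReal (prod_le x)
    _ = ENNReal.ofReal ((π / √c) ^ Fintype.card ι) := by
        rw [volume_pi, lintegral_ofReal_prod_pi (f := fun _ y ↦ (1 + c * y ^ 2)⁻¹)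
          (fun _ ↦ integrable_inv_one_add_mul_sq hc) fun _ _ ↦ by positivity]
        simp only [integral_inv_one_add_mul_sq hc, Finset.prod_const, Finset.card_univ]

end GaussianIntegrals

section LinearCombinations

lemma integral_exp_neg_mul_sq_gaussianReal (v : ℝ≥0) {c : ℝ} (hc : 0 ≤ c) :
    ∫ g, exp (-(c * g ^ 2)) ∂gaussianReal 0 v = (√(1 + 2 * (c * v)))⁻¹ := by
  rcases eq_or_ne v 0 with rfl | hv
  · simp
  have : (0 : ℝ) < v := by positivity
  have exponent_eq (g : ℝ) :
      -g ^ 2 / (2 * (v : ℝ)) + -(c * g ^ 2) = -(c + 1 / (2 * v)) * g ^ 2 := by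
    field_simp; ring
  rw [integral_gaussianReal_eq_integral_smul hv]
  simp only [gaussianPDFReal, sub_zero, smul_eq_mul, mul_assoc, ← exp_add, exponent_eq]
  rw [integral_const_mul, integral_gaussian, ← sqrt_inv, ← sqrt_mul (by positivity), ← sqrt_inv]
  congr 1
  field_simp
  ring

variable {n d : ℕ} (α : Fin d → ℝ)

instance : IsProbabilityMeasure (gaussPi d α) := by unfold gaussPi; infer_instance

instance : IsProbabilityMeasure (sampleMeasure n d α) := by unfold sampleMeasure; infer_instance

lemma charFunDual_gaussPi (L : StrongDual ℝ (Fin d → ℝ)) :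
    charFunDual (gaussPi d α) L =
      Complex.exp (-(∑ i, (α i).toNNReal * L (Pi.single i 1) ^ 2 : ℝ) / 2) := by
  rw [gaussPi, charFunDual_pi]
  simp only [charFunDual_eq_charFun_map_one, gaussianReal_map_continuousLinearMap,
    charFun_gaussianReal]
  rw [← Complex.exp_sum]
  simp [neg_div, Finset.sum_div, mul_comm, sq_nonneg]

lemma map_smul_gaussPi (c : ℝ) : (gaussPi d α).map (fun y ↦ c • y) = gaussPi d (c ^ 2 • α) := by
  have hsmul : (fun y : Fin d → ℝ ↦ c • y) = fun y i ↦ c * y i := rfl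
  rw [gaussPi, hsmul, Measure.pi_map_pi fun _ ↦ by fun_prop, gaussPi]
  congr 1
  ext1 i
  rw [gaussianReal_map_const_mul, mul_zero, Pi.smul_apply, smul_eq_mul,
    toNNReal_mul (sq_nonneg c), toNNReal_of_nonneg (sq_nonneg c)]

lemma map_sum_smul_sampleMeasure (x : Fin n → ℝ) :
    (sampleMeasure n d α).map (fun X ↦ ∑ j, x j • X j) = gaussPi d ((x ⬝ᵥ x) • α) := by
  have measurable_row (j : Fin n) : Measurable fun X : Fin n → Fin d → ℝ ↦ x j • X j := by
    fun_prop
  have hind : iIndepFun (fun j X ↦ x j • X j) (sampleMeasure n d α) :=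
    iIndepFun_pi (X := fun j y ↦ x j • y) fun j ↦ by fun_prop
  have map_row (j : Fin n) :
      (sampleMeasure n d α).map (fun X ↦ x j • X j) = gaussPi d (x j ^ 2 • α) := by
    rw [← map_smul_gaussPi, ← (measurePreserving_eval (fun _ : Fin n ↦ gaussPi d α) j).map_eq,
      Measure.map_map (by fun_prop) (by fun_prop)]
    rfl
  refine Measure.ext_of_charFunDual ?_
  ext L
  rw [hind.charFunDual_map_fun_sum_eq_prod fun j ↦ (measurable_row j).aemeasurable,
    Finset.prod_apply]
  simp only [map_row, charFunDual_gaussPi, ← Complex.exp_sum, ← Finset.sum_div,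
    Finset.sum_neg_distrib, ← Complex.ofReal_sum, Pi.smul_apply, smul_eq_mul,
    toNNReal_mul (sq_nonneg _), toNNReal_mul (dotProduct_self_nonneg x), NNReal.coe_mul,
    coe_toNNReal _ (sq_nonneg _), coe_toNNReal _ (dotProduct_self_nonneg x)]
  rw [Finset.sum_comm]
  simp only [mul_assoc, ← Finset.sum_mul, dotProduct_self_eq_sum_sq]

end LinearCombinations

section GramMatrix

variable {n d : ℕ} {α : Fin d → ℝ}

lemma nrm_pow_self {q : ℕ} (hq : q ≠ 0) (h₀ : ∀ i, 0 ≤ α i) : nrm q α ^ q = ∑ i, α i ^ q := by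
  rw [nrm, one_div, rpow_inv_natCast_pow (Finset.sum_nonneg fun i _ ↦ pow_nonneg (h₀ i) q) hq]

lemma nrm_pos {q : ℕ} (h₀ : ∀ i, 0 ≤ α i) (hα : ∃ i, 0 < α i) : 0 < nrm q α := by
  obtain ⟨i, hi⟩ := hα
  exact rpow_pos_of_pos (Finset.sum_pos' (fun j _ ↦ pow_nonneg (h₀ j) q)
    ⟨i, Finset.mem_univ i, pow_pos hi q⟩) _

lemma sum_sq_div_nrm_sq (h₀ : ∀ i, 0 ≤ α i) (hα : ∃ i, 0 < α i) :
    ∑ i, α i ^ 2 / nrm 2 α ^ 2 = 1 := by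
  rw [← Finset.sum_div, ← nrm_pow_self two_ne_zero h₀, div_self (pow_pos (nrm_pos h₀ hα) 2).ne']

lemma sum_sq_div_nrm_sq_sq (h₀ : ∀ i, 0 ≤ α i) :
    ∑ i, (α i ^ 2 / nrm 2 α ^ 2) ^ 2 = (nrm 4 α / nrm 2 α) ^ 4 := by
  simp only [div_pow, ← pow_mul, ← Finset.sum_div, nrm_pow_self four_ne_zero h₀]

variable (α) in
lemma gramMat_eq_mul_diagonal_mul_transpose (X : Fin n → Fin d → ℝ) :
    gramMat α X = Matrix.of X * Matrix.diagonal (fun i ↦ α i / nrm 2 α ^ 2) *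
      (Matrix.of X).transpose := by
  ext j k
  rw [Matrix.mul_apply]
  simp only [gramMat, Matrix.of_apply, Matrix.mul_diagonal, Matrix.transpose_apply,
    Finset.sum_div]
  exact Finset.sum_congr rfl fun i _ ↦ by ring

variable (α) in
lemma quadForm_gramMat (X : Fin n → Fin d → ℝ) (x : Fin n → ℝ) :
    x ⬝ᵥ (gramMat α X).mulVec x = ∑ i, α i / nrm 2 α ^ 2 * (∑ j, x j • X j) i ^ 2 := by
  have vecMul_of : Matrix.vecMul x (Matrix.of X) = ∑ j, x j • X j := Matrix.vecMul_eq_sum _ _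
  rw [gramMat_eq_mul_diagonal_mul_transpose, ← Matrix.mulVec_mulVec, ← Matrix.mulVec_mulVec,
    Matrix.dotProduct_mulVec, Matrix.mulVec_transpose, vecMul_of]
  simp only [dotProduct, Matrix.mulVec_diagonal]
  exact Finset.sum_congr rfl fun i _ ↦ by ring

lemma posSemidef_gramMat (h₀ : ∀ i, 0 ≤ α i) (X : Fin n → Fin d → ℝ) :
    (gramMat α X).PosSemidef := by
  rw [gramMat_eq_mul_diagonal_mul_transpose, ← Matrix.conjTranspose_eq_transpose_of_trivial]
  exact (Matrix.PosSemidef.diagonal fun i ↦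
    div_nonneg (h₀ i) (sq_nonneg _)).mul_mul_conjTranspose_same _

variable (α) in
lemma measurable_det_gramMat : Measurable fun X : Fin n → Fin d → ℝ ↦ (gramMat α X).det := by
  simp only [Matrix.det_apply, gramMat, Matrix.of_apply]
  fun_prop

variable (n α) in
lemma integrable_trace_gramMat :
    Integrable (fun X ↦ (gramMat α X).trace) (sampleMeasure n d α) := by
  simp only [Matrix.trace, Matrix.diag_apply, gramMat, Matrix.of_apply, mul_assoc, ← sq]
  refine integrable_finsetSum _ fun j _ ↦ (integrable_finsetSum _ fun i _ ↦ ?_).div_const _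
  have hsq : Integrable (fun t : ℝ ↦ t ^ 2) (gaussianReal 0 (α i).toNNReal) :=
    (memLp_id_gaussianReal 2).integrable_sq
  exact (integrable_comp_eval (μ := fun _ : Fin n ↦ gaussPi d α) (i := j)
    (integrable_comp_eval (i := i) hsq)).const_mul (α i)

lemma lintegral_exp_neg_quadForm_gramMat (h₀ : ∀ i, 0 ≤ α i) (x : Fin n → ℝ) :
    ∫⁻ X, ENNReal.ofReal (exp (-(x ⬝ᵥ (gramMat α X).mulVec x))) ∂sampleMeasure n d α =
      ENNReal.ofReal (∏ i, (√(1 + 2 * (α i ^ 2 / nrm 2 α ^ 2 * (x ⬝ᵥ x))))⁻¹) := by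
  have hc (i : Fin d) : 0 ≤ α i / nrm 2 α ^ 2 := div_nonneg (h₀ i) (sq_nonneg _)
  have hint (v : ℝ≥0) (i : Fin d) :
      Integrable (fun t ↦ exp (-(α i / nrm 2 α ^ 2 * t ^ 2))) (gaussianReal 0 v) :=
    .of_bound (by fun_prop) 1 (.of_forall fun t ↦ by
      rw [norm_of_nonneg (exp_pos _).le, exp_le_one_iff, neg_nonpos]
      exact mul_nonneg (hc i) (sq_nonneg t))
  simp only [quadForm_gramMat, ← Finset.sum_neg_distrib, exp_sum]
  rw [← lintegral_map (f := fun y : Fin d → ℝ ↦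
      ENNReal.ofReal (∏ i, exp (-(α i / nrm 2 α ^ 2 * y i ^ 2)))) (by fun_prop) (by fun_prop),
    map_sum_smul_sampleMeasure, gaussPi, lintegral_ofReal_prod_pi
      (f := fun i t ↦ exp (-(α i / nrm 2 α ^ 2 * t ^ 2))) (fun i ↦ hint _ i)
      fun _ _ ↦ (exp_pos _).le]
  simp only [integral_exp_neg_mul_sq_gaussianReal _ (hc _), Pi.smul_apply, smul_eq_mul,
    coe_toNNReal _ (mul_nonneg (dotProduct_self_nonneg x) (h₀ _))]
  exact congrArg ENNReal.ofReal (Finset.prod_congr rfl fun i _ ↦ by ring_nf)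

end GramMatrix

section PointwiseBound

variable {ι : Type*} [Fintype ι] {w : ι → ℝ} {n : ℕ} {t y : ℝ}

lemma inv_sqrt_one_add_two_mul_le_exp (ht : 0 ≤ t) : (√(1 + 2 * t))⁻¹ ≤ exp (-t + t ^ 2) := by
  have hlog : 2 * t - 2 * t ^ 2 ≤ log (1 + 2 * t) := by
    refine le_trans ?_ (le_log_one_add_of_nonneg (by positivity : 0 ≤ 2 * t))
    rw [le_div_iff₀ (by positivity)]
    nlinarith [pow_nonneg ht 3]
  rw [inv_le_comm₀ (by positivity) (exp_pos _), ← exp_neg]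
  apply le_sqrt_of_sq_le
  rw [← exp_nat_mul, ← le_log_iff_exp_le (by positivity)]
  push_cast
  linarith

lemma prod_inv_sqrt_one_add_two_mul_le_exp (hw : ∀ i, 0 ≤ w i) (ht : 0 ≤ t) :
    ∏ i, (√(1 + 2 * (w i * t)))⁻¹ ≤ exp (-((∑ i, w i) * t) + (∑ i, w i ^ 2) * t ^ 2) := by
  calc ∏ i, (√(1 + 2 * (w i * t)))⁻¹ ≤ ∏ i, exp (-(w i * t) + (w i * t) ^ 2) :=
        Finset.prod_le_prod (fun i _ ↦ by positivity)
          fun i _ ↦ inv_sqrt_one_add_two_mul_le_exp (mul_nonneg (hw i) ht)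
    _ = exp (-((∑ i, w i) * t) + (∑ i, w i ^ 2) * t ^ 2) := by
        simp only [← exp_sum, Finset.sum_add_distrib, Finset.sum_neg_distrib, mul_pow,
          Finset.sum_mul]

lemma prod_inv_sqrt_one_add_two_mul_le_rpow (hw : ∀ i, 0 ≤ w i) (hw₁ : ∑ i, w i = 1)
    (hy : 0 < y) (hwy : ∀ i, 2 * (w i * y) ≤ 1) (ht : 0 ≤ t) :
    ∏ i, (√(1 + 2 * (w i * t)))⁻¹ ≤ (1 + t / y) ^ (-y) := by
  have hbase : 0 < 1 + t / y := by positivity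
  have factor_le (i : ι) : (√(1 + 2 * (w i * t)))⁻¹ ≤ (1 + t / y) ^ (-(w i * y)) := by
    have hbern : (1 + t / y) ^ (2 * (w i * y)) ≤ 1 + 2 * (w i * t) := by
      calc (1 + t / y) ^ (2 * (w i * y)) ≤ 1 + 2 * (w i * y) * (t / y) :=
            rpow_one_add_le_one_add_mul_self (by linarith [div_nonneg ht hy.le])
              (by have := hw i; positivity) (hwy i)
        _ = 1 + 2 * (w i * t) := by field_simp
    rw [rpow_neg hbase.le]
    gcongr
    apply le_sqrt_of_sq_le
    rwa [← rpow_mul_natCast hbase.le, Nat.cast_ofNat, mul_comm]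
  calc ∏ i, (√(1 + 2 * (w i * t)))⁻¹ ≤ ∏ i, (1 + t / y) ^ (-(w i * y)) :=
        Finset.prod_le_prod (fun i _ ↦ by positivity) fun i _ ↦ factor_le i
    _ = (1 + t / y) ^ (-y) := by
        rw [← rpow_sum_of_pos hbase, Finset.sum_neg_distrib, ← Finset.sum_mul, hw₁, one_mul]

lemma two_mul_mul_le_one_of_sum_sq (hy : 0 < y)
    (hw₂ : ∑ i, w i ^ 2 = 1 / (2 * y) ^ 2) (i : ι) : 2 * (w i * y) ≤ 1 := by
  have hle : w i ^ 2 ≤ (1 / (2 * y)) ^ 2 := by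
    rw [one_div_pow, ← hw₂]
    exact Finset.single_le_sum (f := fun i ↦ w i ^ 2) (fun _ _ ↦ sq_nonneg _) (Finset.mem_univ i)
  have := (le_div_iff₀ (by positivity)).mp (le_of_sq_le_sq hle (by positivity))
  linarith

lemma rpow_neg_le_exp_sub_mul_inv_pow {b : ℝ} (hb : exp 1 ≤ b) (hny : n ≤ y) :
    b ^ (-y) ≤ exp (n - y) * (b ^ n)⁻¹ := by
  have hb₀ : 0 < b := (exp_pos 1).trans_le hb
  calc b ^ (-y) = b ^ (n - y) * (b ^ n)⁻¹ := by
        rw [← rpow_natCast, ← rpow_neg hb₀.le, ← rpow_add hb₀]; ring_nf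
    _ ≤ exp 1 ^ (n - y) * (b ^ n)⁻¹ := by
        gcongr ?_ * _
        exact rpow_le_rpow_of_nonpos (exp_pos 1) hb (sub_nonpos.mpr hny)
    _ = exp (n - y) * (b ^ n)⁻¹ := by rw [← exp_mul, one_mul]

lemma prod_inv_sqrt_one_add_two_mul_le (hw : ∀ i, 0 ≤ w i) (hw₁ : ∑ i, w i = 1) (hy : 0 < y)
    (hw₂ : ∑ i, w i ^ 2 = 1 / (2 * y) ^ 2) (hny : n ≤ y) (ht : 0 ≤ t) :
    ∏ i, (√(1 + 2 * (w i * t)))⁻¹ ≤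
      exp (-t) + 2 * (∑ i, w i ^ 2) * (t ^ 2 * exp (-t)) +
        exp (n - y) * ((1 + 1 / y * t) ^ n)⁻¹ := by
  rcases le_or_gt t (2 * y) with hty | hty
  · set z := (∑ i, w i ^ 2) * t ^ 2 with hz
    have hz₀ : 0 ≤ z := by positivity
    have hz₁ : z ≤ 1 := by
      rw [hz, hw₂, one_div_mul_eq_div]
      exact (div_le_one (by positivity)).mpr (pow_le_pow_left₀ ht hty 2)
    have hexp : exp z ≤ 1 + 2 * z := by
      have := (abs_le.mp (abs_exp_sub_one_le (abs_le.mpr ⟨by linarith, hz₁⟩))).2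
      rw [abs_of_nonneg hz₀] at this
      linarith
    calc ∏ i, (√(1 + 2 * (w i * t)))⁻¹ ≤ exp (-t) * exp z := by
          simpa only [hw₁, one_mul, exp_add] using prod_inv_sqrt_one_add_two_mul_le_exp hw ht
      _ ≤ exp (-t) * (1 + 2 * z) := by gcongr
      _ = exp (-t) + 2 * (∑ i, w i ^ 2) * (t ^ 2 * exp (-t)) := by ring
      _ ≤ _ := le_add_of_nonneg_right (by positivity)
  · have hbase : exp 1 ≤ 1 + t / y := by
      linarith [exp_one_lt_d9, (lt_div_iff₀ hy).mpr hty]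
    have hwy := two_mul_mul_le_one_of_sum_sq hy hw₂
    calc ∏ i, (√(1 + 2 * (w i * t)))⁻¹ ≤ (1 + t / y) ^ (-y) :=
          prod_inv_sqrt_one_add_two_mul_le_rpow hw hw₁ hy hwy ht
      _ ≤ exp (n - y) * ((1 + t / y) ^ n)⁻¹ := rpow_neg_le_exp_sub_mul_inv_pow hbase hny
      _ = exp (n - y) * ((1 + 1 / y * t) ^ n)⁻¹ := by rw [one_div_mul_eq_div]
      _ ≤ _ := le_add_of_nonneg_left (by positivity)

end PointwiseBound

section NegativeMoment

variable {Ω : Type*} [MeasurableSpace Ω] {μ : Measure Ω} {f g : Ω → ℝ} {p : ℝ}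

lemma ae_pos_of_lintegral_rpow_neg_ne_top (hf : AEMeasurable f μ) (hp : 0 < p)
    (h : ∫⁻ ω, ENNReal.ofReal (f ω) ^ (-p) ∂μ ≠ ∞) : ∀ᵐ ω ∂μ, 0 < f ω := by
  filter_upwards [ae_lt_top' (by fun_prop) h] with ω hω
  by_contra! hfω
  simp [ENNReal.ofReal_of_nonpos hfω, ENNReal.zero_rpow_of_neg (neg_neg_of_pos hp)] at hω

lemma lintegral_ofReal_rpow_neg (hf : AEMeasurable f μ) (hp : 0 < p)
    (h : ∫⁻ ω, ENNReal.ofReal (f ω) ^ (-p) ∂μ ≠ ∞) :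
    ∫⁻ ω, ENNReal.ofReal (f ω ^ (-p)) ∂μ = ∫⁻ ω, ENNReal.ofReal (f ω) ^ (-p) ∂μ :=
  lintegral_congr_ae <| (ae_pos_of_lintegral_rpow_neg_ne_top hf hp h).mono fun _ hω ↦
    (ENNReal.ofReal_rpow_of_pos hω).symm

lemma rpow_neg_nonneg_ae (hf : AEMeasurable f μ) (hp : 0 < p)
    (h : ∫⁻ ω, ENNReal.ofReal (f ω) ^ (-p) ∂μ ≠ ∞) : 0 ≤ᵐ[μ] fun ω ↦ f ω ^ (-p) :=
  (ae_pos_of_lintegral_rpow_neg_ne_top hf hp h).mono fun _ hω ↦ rpow_nonneg hω.le _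

lemma integrable_rpow_neg (hf : AEMeasurable f μ) (hp : 0 < p)
    (h : ∫⁻ ω, ENNReal.ofReal (f ω) ^ (-p) ∂μ ≠ ∞) : Integrable (fun ω ↦ f ω ^ (-p)) μ := by
  refine ⟨(hf.pow_const _).aestronglyMeasurable, ?_⟩
  rw [hasFiniteIntegral_iff_ofReal (rpow_neg_nonneg_ae hf hp h),
    lintegral_ofReal_rpow_neg hf hp h]
  exact h.lt_top

lemma neg_log_le_rpow_neg_sub_one_div {y : ℝ} (hp : 0 < p) (hy : 0 < y) :
    -log y ≤ (y ^ (-p) - 1) / p := by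
  have h := log_le_sub_one_of_pos (rpow_pos_of_pos hy (-p))
  rw [log_rpow hy] at h
  rw [le_div_iff₀ hp]
  linarith

lemma integrable_log_of_le_exp (hf : AEMeasurable f μ) (hp : 0 < p)
    (h : ∫⁻ ω, ENNReal.ofReal (f ω) ^ (-p) ∂μ ≠ ∞) (hg : Integrable g μ)
    (hfg : ∀ ω, f ω ≤ exp (g ω)) : Integrable (fun ω ↦ log (f ω)) μ := by
  refine (((integrable_rpow_neg hf hp h).div_const p).add hg.abs).mono'
    (measurable_log.comp_aemeasurable hf).aestronglyMeasurable ?_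
  filter_upwards [ae_pos_of_lintegral_rpow_neg_ne_top hf hp h] with ω hω
  have upper : log (f ω) ≤ g ω := (log_le_iff_le_exp hω).mpr (hfg ω)
  have lower := neg_log_le_rpow_neg_sub_one_div hp hω
  have := rpow_pos_of_pos hω (-p)
  rw [sub_div] at lower
  simp only [Pi.add_apply, norm_eq_abs]
  refine abs_le.mpr ⟨?_, ?_⟩
  · linarith [abs_nonneg (g ω), one_div_pos.mpr hp]
  · linarith [le_abs_self (g ω), div_pos this hp]

lemma neg_integral_log_le [IsProbabilityMeasure μ] {δ : ℝ} (hf : AEMeasurable f μ) (hp : 0 < p)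
    (hδ : 0 ≤ δ) (h : ∫⁻ ω, ENNReal.ofReal (f ω) ^ (-p) ∂μ ≤ ENNReal.ofReal (1 + δ))
    (hlog : Integrable (fun ω ↦ log (f ω)) μ) : -∫ ω, log (f ω) ∂μ ≤ δ / p := by
  have hfin := ne_top_of_le_ne_top ENNReal.ofReal_ne_top h
  have hint := integrable_rpow_neg hf hp hfin
  have moment_le : ∫ ω, f ω ^ (-p) ∂μ ≤ 1 + δ := by
    rw [integral_eq_lintegral_of_nonneg_ae (rpow_neg_nonneg_ae hf hp hfin)
      hint.aestronglyMeasurable, lintegral_ofReal_rpow_neg hf hp hfin]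
    exact ENNReal.toReal_le_of_le_ofReal (by positivity) h
  calc -∫ ω, log (f ω) ∂μ = ∫ ω, -log (f ω) ∂μ := (integral_neg _).symm
    _ ≤ ∫ ω, (f ω ^ (-p) - 1) / p ∂μ := by
      refine integral_mono_ae hlog.neg ((hint.sub (integrable_const 1)).div_const p) ?_
      filter_upwards [ae_pos_of_lintegral_rpow_neg_ne_top hf hp hfin] with ω hω
      exact neg_log_le_rpow_neg_sub_one_div hp hω
    _ = (∫ ω, f ω ^ (-p) ∂μ - 1) / p := by
      rw [integral_div, integral_sub hint (integrable_const 1), integral_const, probReal_univ,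
        one_smul]
    _ ≤ δ / p := by gcongr; linarith

end NegativeMoment

lemma det_le_exp_trace_of_posSemidef {ι : Type*} [Fintype ι] [DecidableEq ι] {M : Matrix ι ι ℝ}
    (hM : M.PosSemidef) : M.det ≤ exp M.trace := by
  rw [hM.1.det_eq_prod_eigenvalues, hM.1.trace_eq_sum_eigenvalues]
  simp only [RCLike.ofReal_real_eq_id, id_eq, exp_sum]
  exact Finset.prod_le_prod (fun i _ ↦ hM.eigenvalues_nonneg i)
    fun i _ ↦ by linarith [add_one_le_exp (hM.1.eigenvalues i)]

section MainEstimate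

lemma exp_sub_pow_mul_sqrt_pi_mul_pow_le {n : ℕ} {u : ℝ} (hn : n ≠ 0) (hu : 0 < u)
    (hnu : 4 * n ≤ u ^ 2) : exp (n - u ^ 3) * √(π * u ^ 3) ^ n ≤ 8 / (u ^ 3) ^ 2 := by
  have hn₁ : (1 : ℝ) ≤ n := by exact_mod_cast Nat.one_le_iff_ne_zero.mpr hn
  have hu₁ : 1 ≤ u := by nlinarith
  have hsqrt : √(π * u ^ 3) ≤ exp ((3 * u - 1) / 2) := by
    have hpi : π ≤ exp 2 := by
      linarith [pi_le_four, quadratic_le_exp_of_nonneg (x := 2) (by norm_num)]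
    refine sqrt_le_iff.mpr ⟨(exp_pos _).le, ?_⟩
    calc π * u ^ 3 ≤ exp 2 * exp (u - 1) ^ 3 := by
          gcongr; linarith [add_one_le_exp (u - 1)]
      _ = exp ((3 * u - 1) / 2) ^ 2 := by
          rw [← exp_nat_mul, ← exp_nat_mul, ← exp_add]; push_cast; ring_nf
  have hexponent : n - u ^ 3 + n * ((3 * u - 1) / 2) ≤ -(u ^ 3 / 2) := by nlinarith
  calc exp (n - u ^ 3) * √(π * u ^ 3) ^ n
      ≤ exp (n - u ^ 3) * exp ((3 * u - 1) / 2) ^ n := by gcongr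
    _ ≤ exp (-(u ^ 3 / 2)) := by
        rw [← exp_nat_mul, ← exp_add]; exact exp_le_exp.mpr hexponent
    _ ≤ 8 / (u ^ 3) ^ 2 := by
        rw [exp_neg, ← one_div, div_le_div_iff₀ (exp_pos _) (by positivity)]
        linarith [sq_le_two_mul_sq_mul_exp_div two_pos (pow_pos hu 3).le]

lemma exp_sub_mul_sqrt_pi_mul_pow_le {n : ℕ} {y : ℝ} (hn : n ≠ 0) (hy : 0 < y)
    (hny : 64 * n ^ 3 ≤ y ^ 2) : exp (n - y) * √(π * y) ^ n ≤ 8 / y ^ 2 := by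
  obtain ⟨u, hu, rfl⟩ : ∃ u > 0, u ^ 3 = y :=
    ⟨y ^ ((3 : ℕ)⁻¹ : ℝ), rpow_pos_of_pos hy _, rpow_inv_natCast_pow hy.le three_ne_zero⟩
  refine exp_sub_pow_mul_sqrt_pi_mul_pow_le hn hu ?_
  refine le_of_pow_le_pow_left₀ three_ne_zero (by positivity) ?_
  calc (4 * n : ℝ) ^ 3 = 64 * n ^ 3 := by ring
    _ ≤ (u ^ 3) ^ 2 := hny
    _ = (u ^ 2) ^ 3 := by ring

lemma lintegral_majorant_le {ι : Type*} [Fintype ι] [Nonempty ι] {a b y : ℝ} (ha : 0 ≤ a)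
    (hb : 0 ≤ b) (hy : 0 < y) :
    ∫⁻ x : ι → ℝ, ENNReal.ofReal (exp (-(x ⬝ᵥ x)) + a * ((x ⬝ᵥ x) ^ 2 * exp (-(x ⬝ᵥ x))) +
        b * ((1 + 1 / y * (x ⬝ᵥ x)) ^ Fintype.card ι)⁻¹) ≤
      ENNReal.ofReal (√π ^ Fintype.card ι *
        (1 + 12 * a * Fintype.card ι ^ 2 + b * √(π * y) ^ Fintype.card ι)) := by
  set n := Fintype.card ι
  have bulk := lintegral_exp_neg_mul_dotProduct_self (ι := ι) one_pos
  have tail := lintegral_inv_one_add_mul_dotProduct_self_pow_le (ι := ι) (one_div_pos.mpr hy)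
  have tail_eq : π / √(1 / y) = √π * √(π * y) := by
    rw [sqrt_div zero_le_one, sqrt_one, div_div_eq_mul_div, div_one, sqrt_mul pi_pos.le,
      ← mul_assoc, mul_self_sqrt pi_pos.le]
  simp only [one_mul, div_one] at bulk
  rw [tail_eq] at tail
  have ofReal_eq (x : ι → ℝ) : ENNReal.ofReal (exp (-(x ⬝ᵥ x)) +
      a * ((x ⬝ᵥ x) ^ 2 * exp (-(x ⬝ᵥ x))) + b * ((1 + 1 / y * (x ⬝ᵥ x)) ^ n)⁻¹) =
      ENNReal.ofReal (exp (-(x ⬝ᵥ x))) +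
        ENNReal.ofReal a * ENNReal.ofReal ((x ⬝ᵥ x) ^ 2 * exp (-(x ⬝ᵥ x))) +
        ENNReal.ofReal b * ENNReal.ofReal ((1 + 1 / y * (x ⬝ᵥ x)) ^ n)⁻¹ := by
    have := dotProduct_self_nonneg x
    rw [← ENNReal.ofReal_mul ha, ← ENNReal.ofReal_mul hb, ← ENNReal.ofReal_add (by positivity)
      (by positivity), ← ENNReal.ofReal_add (by positivity) (by positivity)]
  have hdot : Measurable fun x : ι → ℝ ↦ x ⬝ᵥ x := by unfold dotProduct; fun_prop
  simp only [ofReal_eq]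
  rw [lintegral_add_left (by fun_prop), lintegral_add_left (by fun_prop),
    lintegral_const_mul' _ _ ENNReal.ofReal_ne_top, lintegral_const_mul' _ _ ENNReal.ofReal_ne_top,
    bulk]
  calc _ ≤ ENNReal.ofReal (√π ^ n) + ENNReal.ofReal a * ENNReal.ofReal (12 * n ^ 2 * √π ^ n) +
        ENNReal.ofReal b * ENNReal.ofReal ((√π * √(π * y)) ^ n) := by
        gcongr
        exact lintegral_sq_mul_exp_neg_dotProduct_self_le
    _ = ENNReal.ofReal (√π ^ n * (1 + 12 * a * n ^ 2 + b * √(π * y) ^ n)) := by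
        rw [← ENNReal.ofReal_mul ha, ← ENNReal.ofReal_mul hb, ← ENNReal.ofReal_add (by positivity)
          (by positivity), ← ENNReal.ofReal_add (by positivity) (by positivity)]
        ring_nf

lemma lintegral_prod_inv_sqrt_one_add_two_mul_le {ι κ : Type*} [Fintype ι] [Fintype κ]
    {w : κ → ℝ} (hw : ∀ k, 0 ≤ w k) (hw₁ : ∑ k, w k = 1)
    (hw₂ : Fintype.card ι ^ 3 * ∑ k, w k ^ 2 ≤ 1 / 256) :
    ∫⁻ x : ι → ℝ, ENNReal.ofReal (∏ k, (√(1 + 2 * (w k * (x ⬝ᵥ x))))⁻¹) ≤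
      ENNReal.ofReal (√π ^ Fintype.card ι * (1 + 56 * (Fintype.card ι ^ 2 * ∑ k, w k ^ 2))) := by
  rcases isEmpty_or_nonempty ι with hι | hι
  · simp [volume_pi]
  set n := Fintype.card ι
  have hn : n ≠ 0 := Fintype.card_ne_zero
  have hn₁ : (1 : ℝ) ≤ n := by exact_mod_cast Nat.one_le_iff_ne_zero.mpr hn
  set τ := ∑ k, w k ^ 2
  have hτ : 0 < τ := by
    obtain ⟨k, -, hk⟩ := Finset.exists_ne_zero_of_sum_ne_zero (hw₁.trans_ne one_ne_zero)
    exact Finset.sum_pos' (fun _ _ ↦ sq_nonneg _) ⟨k, Finset.mem_univ k, by positivity⟩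
  obtain ⟨y, hy, hτy⟩ : ∃ y > 0, τ = 1 / (2 * y) ^ 2 :=
    ⟨1 / (2 * √τ), by positivity, by field_simp; rw [sq_sqrt hτ.le]⟩
  have hny : 64 * (n : ℝ) ^ 3 ≤ y ^ 2 := by
    rw [hτy] at hw₂
    field_simp at hw₂
    linarith
  have hn_le : (n : ℝ) ≤ y := le_of_pow_le_pow_left₀ two_ne_zero hy.le (by nlinarith)
  calc _ ≤ ∫⁻ x : ι → ℝ, ENNReal.ofReal (exp (-(x ⬝ᵥ x)) +
          2 * τ * ((x ⬝ᵥ x) ^ 2 * exp (-(x ⬝ᵥ x))) +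
          exp (n - y) * ((1 + 1 / y * (x ⬝ᵥ x)) ^ n)⁻¹) :=
        lintegral_mono fun x ↦ ENNReal.ofReal_le_ofReal <|
          prod_inv_sqrt_one_add_two_mul_le hw hw₁ hy hτy hn_le (dotProduct_self_nonneg x)
    _ ≤ ENNReal.ofReal (√π ^ n * (1 + 12 * (2 * τ) * n ^ 2 + exp (n - y) * √(π * y) ^ n)) :=
        lintegral_majorant_le (by positivity) (exp_pos _).le hy
    _ ≤ ENNReal.ofReal (√π ^ n * (1 + 56 * (n ^ 2 * τ))) := by
        have tail_le : exp (n - y) * √(π * y) ^ n ≤ 32 * τ := by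
          refine (exp_sub_mul_sqrt_pi_mul_pow_le hn hy hny).trans_eq ?_
          rw [hτy]; field_simp; norm_num
        refine ENNReal.ofReal_le_ofReal (mul_le_mul_of_nonneg_left ?_ (by positivity))
        nlinarith [one_le_pow₀ hn₁ (n := 2)]

variable {n d : ℕ} {α : Fin d → ℝ}

lemma lintegral_det_gramMat_rpow_neg_half_le (h₀ : ∀ i, 0 ≤ α i) (hα : ∃ i, 0 < α i)
    (hε : n ^ 3 * (nrm 4 α / nrm 2 α) ^ 4 ≤ 1 / 256) :
    ∫⁻ X, ENNReal.ofReal (gramMat α X).det ^ (-(1 / 2) : ℝ) ∂sampleMeasure n d α ≤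
      ENNReal.ofReal (1 + 56 * (n ^ 2 * (nrm 4 α / nrm 2 α) ^ 4)) := by
  have hpi : 0 < √π ^ n := by positivity
  rw [← ENNReal.mul_le_mul_iff_right (ENNReal.ofReal_pos.mpr hpi).ne' ENNReal.ofReal_ne_top,
    ← ENNReal.ofReal_mul hpi.le, ← lintegral_const_mul' _ _ ENNReal.ofReal_ne_top]
  calc ∫⁻ X, ENNReal.ofReal (√π ^ n) * ENNReal.ofReal (gramMat α X).det ^ (-(1 / 2) : ℝ)
        ∂sampleMeasure n d α
      ≤ ∫⁻ X, (∫⁻ x : Fin n → ℝ, ENNReal.ofReal (exp (-(x ⬝ᵥ (gramMat α X).mulVec x))))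
        ∂sampleMeasure n d α := by
        refine lintegral_mono fun X ↦ ?_
        simpa only [Fintype.card_fin] using
          le_lintegral_exp_neg_quadForm_of_posSemidef (posSemidef_gramMat h₀ X)
    _ = ∫⁻ x : Fin n → ℝ, ∫⁻ X, ENNReal.ofReal (exp (-(x ⬝ᵥ (gramMat α X).mulVec x)))
        ∂sampleMeasure n d α := by
        refine lintegral_lintegral_swap (Measurable.aemeasurable ?_)
        simp only [Function.uncurry_def, quadForm_gramMat, Finset.sum_apply, Pi.smul_apply]
        fun_prop
    _ = ∫⁻ x : Fin n → ℝ, ENNReal.ofReal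
          (∏ i, (√(1 + 2 * (α i ^ 2 / nrm 2 α ^ 2 * (x ⬝ᵥ x))))⁻¹) := by
        simp only [lintegral_exp_neg_quadForm_gramMat h₀]
    _ ≤ ENNReal.ofReal (√π ^ n * (1 + 56 * (n ^ 2 * (nrm 4 α / nrm 2 α) ^ 4))) := by
        rw [← sum_sq_div_nrm_sq_sq h₀] at hε ⊢
        simpa only [Fintype.card_fin] using lintegral_prod_inv_sqrt_one_add_two_mul_le
          (ι := Fin n) (fun i ↦ by positivity) (sum_sq_div_nrm_sq h₀ hα) (by simpa using hε)

theorem neg_expected_log_det_bound_general (h₀ : ∀ i, 0 ≤ α i) (hα : ∃ i, 0 < α i)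
    (hε : n ^ 3 * (nrm 4 α / nrm 2 α) ^ 4 ≤ 1 / 256) :
    (∀ᵐ X ∂sampleMeasure n d α, 0 < (gramMat α X).det) ∧
      Integrable (fun X ↦ log (gramMat α X).det) (sampleMeasure n d α) ∧
      -∫ X, log (gramMat α X).det ∂sampleMeasure n d α ≤
        112 * (n ^ 2 * (nrm 4 α / nrm 2 α) ^ 4) := by
  have hmeas := (measurable_det_gramMat (n := n) α).aemeasurable (μ := sampleMeasure n d α)
  have moment_le := lintegral_det_gramMat_rpow_neg_half_le h₀ hα hε
  have moment_ne_top := ne_top_of_le_ne_top ENNReal.ofReal_ne_top moment_le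
  have hint := integrable_log_of_le_exp hmeas one_half_pos moment_ne_top
    (integrable_trace_gramMat n α) fun X ↦ det_le_exp_trace_of_posSemidef (posSemidef_gramMat h₀ X)
  refine ⟨ae_pos_of_lintegral_rpow_neg_ne_top hmeas one_half_pos moment_ne_top, hint, ?_⟩
  linarith [neg_integral_log_le hmeas one_half_pos (by positivity) moment_le hint]

end MainEstimate

/-- Lemma 9. There is a universal constant `C > 0` such that if the
entries of `α` lie in `[0,1]` with some entry `1`, `‖α‖₂² > n + 1`, and `‖α‖₂²` is large
enough relative to `n` (as guaranteed when `n³(‖α‖₄/‖α‖₂)⁴` is small), then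
`-E ln det((1/‖α‖₂²)𝕐D_α𝕐ᵀ) ≤ C (n²(‖α‖₄/‖α‖₂)⁴ + √(n(‖α‖₄/‖α‖₂)⁴))`. -/
theorem neg_expected_log_det_bound :
    ∃ C > (0 : ℝ), ∃ ε > (0 : ℝ), ∀ (n d : ℕ) (α : Fin d → ℝ),
      (∀ i, α i ∈ Set.Icc (0 : ℝ) 1) → (∃ i, α i = 1) →
      nrm 2 α ^ 2 > (n : ℝ) + 1 →
      (n : ℝ) ^ 3 * (nrm 4 α / nrm 2 α) ^ 4 < ε →
        -(∫ X, Real.log (gramMat α X).det ∂(sampleMeasure n d α))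
          ≤ C * ((n : ℝ) ^ 2 * (nrm 4 α / nrm 2 α) ^ 4
            + Real.sqrt ((n : ℝ) * (nrm 4 α / nrm 2 α) ^ 4)) := by
  refine ⟨112, by norm_num, 1 / 256, by norm_num, fun n d α hα ⟨i, hi⟩ _ hε ↦ ?_⟩
  obtain ⟨-, -, hbound⟩ := neg_expected_log_det_bound_general (fun i ↦ (hα i).1)
    ⟨i, hi ▸ one_pos⟩ hε.le
  linarith [sqrt_nonneg (n * (nrm 4 α / nrm 2 α) ^ 4)]

end
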